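/- arXiv:2112.04727 — 4 statements merged into one kernel-verified Lean document; each statement's English description precedes it below -/
import Mathlib

section
/- Let T be a tree on a finite, nonempty, linearly ordered vertex type V with n = |V| vertices, and let m ≥ 1 be an integer. Let S be the m-order subdivision of T. Then the Wiener index of S satisfies W(S) = (m+1)^3·W(T) − m(m+1)^2·n^2/2 + m(m+1)(2m+1)·n/3 − m(m^2−1)/6; equivalently, 6·W(S) = 6(m+1)^3·W(T) − 3m(m+1)^2·n^2 + 2m(m+1)(2m+1)·n − m(m^2−1). -/
/-- The Wiener index of a finite simple graph: half the sum of the graph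
distances over all ordered pairs of vertices. -/
noncomputable def wienerIndex {V : Type*} [Fintype V] (G : SimpleGraph V) : ℚ :=
  (∑ u : V, ∑ v : V, (G.dist u v : ℚ)) / 2

/-- The `m`-order subdivision of a graph `T` on a linearly ordered vertex type:
every edge of `T` is replaced by a path of length `m + 1` through `m` new vertices. -/
def mSubdivision {V : Type*} [LinearOrder V] (T : SimpleGraph V) (m : ℕ) :
    SimpleGraph (V ⊕ (T.edgeSet × Fin m)) :=
  SimpleGraph.fromRel (fun x y =>
    match x, y with
    | Sum.inl u, Sum.inr (e, i) =>
        (i.val = 0 ∧ u = Sym2.inf e.1) ∨ (i.val = m - 1 ∧ u = Sym2.sup e.1)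
    | Sum.inr (e, i), Sum.inr (e', j) => e = e' ∧ i.val + 1 = j.val
    | _, _ => False)

open Finset

namespace WSub

variable {V : Type*}

lemma closer_exists {T : SimpleGraph V} (hT : T.IsTree) {u v : V} (h : v ≠ u) :
    ∃ w, T.Adj v w ∧ T.dist u v = T.dist u w + 1 := by
  obtain ⟨p, hp⟩ := hT.connected.exists_walk_length_eq_dist v u
  cases p with
  | nil => exact absurd rfl h
  | cons h1 p1 =>
    rename_i w
    refine ⟨w, h1, ?_⟩
    have h2 := SimpleGraph.dist_le p1
    rw [SimpleGraph.Walk.length_cons, SimpleGraph.dist_comm] at hp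
    rw [SimpleGraph.dist_comm] at h2
    rcases hT.dist_eq_dist_add_one_of_adj u h1 with h3 | h3 <;> omega

lemma closer_unique {T : SimpleGraph V} (hT : T.IsTree) {u v w1 w2 : V}
    (h1 : T.Adj v w1) (h2 : T.Adj v w2) (e1 : T.dist u v = T.dist u w1 + 1)
    (e2 : T.dist u v = T.dist u w2 + 1) : w1 = w2 := by
  obtain ⟨p1, hp1⟩ := hT.connected.exists_walk_length_eq_dist w1 u
  obtain ⟨p2, hp2⟩ := hT.connected.exists_walk_length_eq_dist w2 u
  have q1 : (p1.cons h1).IsPath := by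
    apply SimpleGraph.Walk.isPath_of_length_eq_dist
    rw [SimpleGraph.Walk.length_cons, hp1, SimpleGraph.dist_comm, ← e1, SimpleGraph.dist_comm]
  have q2 : (p2.cons h2).IsPath := by
    apply SimpleGraph.Walk.isPath_of_length_eq_dist
    rw [SimpleGraph.Walk.length_cons, hp2, SimpleGraph.dist_comm, ← e2, SimpleGraph.dist_comm]
  have := (hT.existsUnique_path v u).unique q1 q2
  simpa using congrArg SimpleGraph.Walk.snd this

lemma no_square {T : SimpleGraph V} (hT : T.IsTree) {a b c d : V}
    (hab : T.Adj a b) (hcd : T.Adj c d) (h1 : T.dist a c = T.dist b d)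
    (h2 : T.dist a d = T.dist a c + 1) (h3 : T.dist b c = T.dist a c + 1) : a = c ∧ b = d := by
  by_cases hac : c = a
  · subst hac
    rw [SimpleGraph.dist_self] at h1
    exact ⟨rfl, (hT.connected.dist_eq_zero_iff.1 h1.symm)⟩
  · exfalso
    obtain ⟨c', hc', e⟩ := closer_exists hT hac
    have hb := hT.dist_eq_dist_add_one_of_adj b hc'
    have hb2 := hT.dist_eq_dist_add_one_of_adj c' hab
    simp only [SimpleGraph.dist_comm (u := c')] at hb2
    have : c' = d := closer_unique hT (u := b) hc' hcd (by omega) (by omega)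
    subst this
    omega

lemma sum_deg_dist [Fintype V] [DecidableEq V] {T : SimpleGraph V} [DecidableRel T.Adj]
    (hT : T.IsTree) (u : V) :
    ∑ v, (T.degree v : ℚ) * (T.dist u v : ℚ) =
      2 * ∑ v, (T.dist u v : ℚ) - ((Fintype.card V : ℚ) - 1) := by
  have hdeg : ∑ v, (T.degree v : ℚ) = 2 * ((Fintype.card V : ℚ) - 1) := by
    have h1 := T.sum_degrees_eq_twice_card_edges
    have h2 := hT.card_edgeFinset
    rw [← h2]
    push_cast
    rw [add_sub_cancel_right]
    exact_mod_cast h1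
  have hz : ∑ v, ∑ w, (if T.Adj v w then ((T.dist u w : ℚ)^2 - (T.dist u v : ℚ)^2) else 0) = 0 := by
    have : ∑ v, ∑ w, (if T.Adj v w then ((T.dist u w : ℚ)^2 - (T.dist u v : ℚ)^2) else 0)
        = - ∑ v, ∑ w, (if T.Adj v w then ((T.dist u w : ℚ)^2 - (T.dist u v : ℚ)^2) else 0) := by
      conv_rhs => rw [Finset.sum_comm]
      rw [← Finset.sum_neg_distrib]
      refine Finset.sum_congr rfl fun v _ => ?_
      rw [← Finset.sum_neg_distrib]
      refine Finset.sum_congr rfl fun w _ => ?_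
      simp only [T.adj_comm w v]
      split_ifs <;> ring
    linarith
  have hv : ∀ v, ∑ w, (if T.Adj v w then ((T.dist u w : ℚ)^2 - (T.dist u v : ℚ)^2) else 0)
      = (T.degree v : ℚ) * (2 * T.dist u v + 1) - 4 * T.dist u v := by
    intro v
    have hd : (T.degree v : ℚ) * (2 * T.dist u v + 1)
        = ∑ w, if T.Adj v w then (2 * (T.dist u v : ℚ) + 1) else 0 := by
      rw [← Finset.sum_filter, Finset.sum_const, ← T.neighborFinset_eq_filter, nsmul_eq_mul,
        SimpleGraph.card_neighborFinset_eq_degree]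
    rw [hd]
    by_cases h : v = u
    · subst h
      rw [SimpleGraph.dist_self]
      simp only [Nat.cast_zero, mul_zero, sub_zero]
      refine Finset.sum_congr rfl fun w _ => ?_
      split_ifs with hw
      · rw [SimpleGraph.dist_eq_one_iff_adj.2 hw]; norm_num
      · rfl
    · obtain ⟨c, hc, e⟩ := closer_exists hT h
      have h4 : 4 * (T.dist u v : ℚ) = ∑ w, if w = c then 4 * (T.dist u v : ℚ) else 0 := by simp
      rw [h4, ← Finset.sum_sub_distrib]
      refine Finset.sum_congr rfl fun w _ => ?_
      by_cases hwc : w = c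
      · subst hwc
        simp only [hc, if_true]
        rw [e]; push_cast; ring
      · by_cases hw : T.Adj v w
        · simp only [hw, hwc, if_true, if_false]
          rcases hT.dist_eq_dist_add_one_of_adj u hw with h3 | h3
          · exact absurd (closer_unique hT hw hc h3 e) hwc
          · rw [h3]; push_cast; ring
        · simp [hw, hwc]
  rw [Finset.sum_congr rfl fun v _ => hv v, Finset.sum_sub_distrib, ← Finset.mul_sum] at hz
  have : ∑ v, (T.degree v : ℚ) * (2 * T.dist u v + 1)
      = 2 * ∑ v, (T.degree v : ℚ) * (T.dist u v : ℚ) + ∑ v, (T.degree v : ℚ) := by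
    rw [Finset.mul_sum, ← Finset.sum_add_distrib]
    exact Finset.sum_congr rfl fun v _ => by ring
  rw [this, hdeg] at hz
  linarith

lemma sum_edges [Fintype V] [LinearOrder V] (T : SimpleGraph V) [DecidableRel T.Adj]
    (g : V → ℚ) :
    ∑ e : T.edgeSet, (g (Sym2.inf e.1) + g (Sym2.sup e.1)) = ∑ v, (T.degree v : ℚ) * g v := by
  have h1 : ∀ e : T.edgeSet, g (Sym2.inf e.1) + g (Sym2.sup e.1)
      = ∑ v, if v ∈ e.1 then g v else 0 := by
    rintro ⟨e, he⟩
    induction e with | _ a b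
    have hne : a ≠ b := T.ne_of_adj he
    have : g a + g b = ∑ v, if v ∈ s(a, b) then g v else 0 := by
      rw [← Finset.sum_filter, ← Finset.sum_pair hne]
      congr 1
      ext x; simp
    rw [← this]
    rcases le_total a b with h | h
    · simp [h]
    · simp [h, add_comm]
  rw [Finset.sum_congr rfl fun e _ => h1 e, Finset.sum_comm]
  refine Finset.sum_congr rfl fun v _ => ?_
  rw [← Finset.sum_filter, Finset.sum_const, nsmul_eq_mul]
  congr 2
  rw [← SimpleGraph.card_incidenceFinset_eq_degree]
  refine Finset.card_bij (fun e _ => e.1) ?_ ?_ ?_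
  · intro e he; simp at he; simp [SimpleGraph.incidenceSet, he, e.2]
  · intro a _ b _ h; exact Subtype.ext h
  · intro e he
    simp [SimpleGraph.incidenceSet] at he
    exact ⟨⟨e, he.1⟩, by simp [he.2], rfl⟩

lemma sum_abs (m : ℕ) : ∑ i : Fin m, ∑ j : Fin m, |(i : ℚ) - (j : ℚ)| = (m : ℚ) * (m^2 - 1) / 3 := by
  have hs : ∀ n : ℕ, ∑ i : Fin n, ((n : ℚ) - (i : ℚ)) = n * (n + 1) / 2 := by
    intro n
    induction n with
    | zero => simp
    | succ k ih =>
      rw [Fin.sum_univ_succ]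
      simp only [Fin.val_succ, Fin.val_zero]
      push_cast
      simp only [add_sub_add_right_eq_sub]
      rw [ih]; ring
  induction m with
  | zero => simp
  | succ n ih =>
    simp only [Fin.sum_univ_castSucc, Fin.val_castSucc, Fin.val_last, Finset.sum_add_distrib]
    rw [ih]
    have h1 : ∀ i : Fin n, |(i : ℚ) - n| = n - i := by
      intro i
      rw [abs_sub_comm, abs_of_nonneg]
      have : (i : ℚ) ≤ n := by exact_mod_cast i.2.le
      linarith
    have h2 : ∀ i : Fin n, |(n : ℚ) - i| = n - i := by
      intro i; rw [abs_sub_comm, h1]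
    simp only [h1, h2, hs]
    push_cast
    simp
    ring

lemma sum_lin1 (m : ℕ) : ∑ i : Fin m, ((m : ℚ) - (i : ℚ)) = m * (m + 1) / 2 := by
  induction m with
  | zero => simp
  | succ k ih =>
    rw [Fin.sum_univ_succ]
    simp only [Fin.val_succ, Fin.val_zero]
    push_cast
    simp only [add_sub_add_right_eq_sub]
    rw [ih]; ring

lemma sum_lin2 (m : ℕ) : ∑ i : Fin m, ((i : ℚ) + 1) = m * (m + 1) / 2 := by
  induction m with
  | zero => simp
  | succ k ih =>
    rw [Fin.sum_univ_castSucc]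
    simp only [Fin.val_castSucc, Fin.val_last]
    rw [ih]; push_cast; ring

lemma fin_cases4 (ac ad bc bd : ℕ) (e1 : ac = ad + 1 ∨ ad = ac + 1)
    (e2 : bc = bd + 1 ∨ bd = bc + 1) (e3 : ac = bc + 1 ∨ bc = ac + 1)
    (e4 : ad = bd + 1 ∨ bd = ad + 1)
    (n1 : ac = bd → ad = ac + 1 → bc = ac + 1 → False)
    (n2 : bc = ad → bd = bc + 1 → ac = bc + 1 → False) :
    (ad = ac + 1 ∧ bc = ac + 1 ∧ bd = ac + 2) ∨ (ac = ad + 1 ∧ bd = ad + 1 ∧ bc = ad + 2)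
      ∨ (bd = bc + 1 ∧ ac = bc + 1 ∧ ad = bc + 2) ∨ (bc = bd + 1 ∧ ad = bd + 1 ∧ ac = bd + 2) := by
  rcases e1 with e1 | e1 <;> rcases e2 with e2 | e2 <;> rcases e3 with e3 | e3 <;>
    rcases e4 with e4 | e4 <;> first
      | (exfalso; omega)
      | (exact (n1 (by omega) (by omega) (by omega)).elim)
      | (exact (n2 (by omega) (by omega) (by omega)).elim)
      | (left; omega)
      | (right; left; omega)
      | (right; right; left; omega)
      | (right; right; right; omega)

lemma fin_arith (m : ℕ) (I J : ℤ) (D ac ad bc bd : ℕ)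
    (uac : (D : ℤ) ≤ I + 1 + (m + 1) * ac + (J + 1))
    (uad : (D : ℤ) ≤ I + 1 + (m + 1) * ad + (m - J))
    (ubc : (D : ℤ) ≤ m - I + (m + 1) * bc + (J + 1))
    (ubd : (D : ℤ) ≤ m - I + (m + 1) * bd + (m - J))
    (la : (m - J) * ac + (J + 1) * ad ≤ I + 1 + D)
    (lb : (m - J) * bc + (J + 1) * bd ≤ m - I + D)
    (h : (ad = ac + 1 ∧ bc = ac + 1 ∧ bd = ac + 2) ∨ (ac = ad + 1 ∧ bd = ad + 1 ∧ bc = ad + 2)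
      ∨ (bd = bc + 1 ∧ ac = bc + 1 ∧ ad = bc + 2) ∨ (bc = bd + 1 ∧ ad = bd + 1 ∧ ac = bd + 2)) :
    (D : ℤ) * (m + 1) = (m - I) * ((m - J) * ac + (J + 1) * ad)
      + (I + 1) * ((m - J) * bc + (J + 1) * bd) := by
  rcases h with ⟨rfl, rfl, rfl⟩ | ⟨rfl, rfl, rfl⟩ | ⟨rfl, rfl, rfl⟩ | ⟨rfl, rfl, rfl⟩
  · have : (D : ℤ) = (m + 1) * ac + (I + 1) + (J + 1) := by
      push_cast at *; apply le_antisymm <;> linarith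
    rw [this]; push_cast; ring
  · have : (D : ℤ) = (m + 1) * ad + (I + 1) + (m - J) := by
      push_cast at *; apply le_antisymm <;> linarith
    rw [this]; push_cast; ring
  · have : (D : ℤ) = (m + 1) * bc + (m - I) + (J + 1) := by
      push_cast at *; apply le_antisymm <;> linarith
    rw [this]; push_cast; ring
  · have : (D : ℤ) = (m + 1) * bd + (m - I) + (m - J) := by
      push_cast at *; apply le_antisymm <;> linarith
    rw [this]; push_cast; ring

section Sub

variable [LinearOrder V] {T : SimpleGraph V} {m : ℕ}

lemma adj_inf_sup (e : T.edgeSet) : T.Adj (Sym2.inf e.1) (Sym2.sup e.1) := by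
  obtain ⟨e, he⟩ := e
  induction e with | _ a b
  have he : T.Adj a b := he
  rcases le_total a b with h | h
  · simpa [h] using he
  · simpa [h] using he.symm

lemma edge_ext {e f : T.edgeSet}
    (h : (Sym2.inf e.1 = Sym2.inf f.1 ∧ Sym2.sup e.1 = Sym2.sup f.1)) : e = f :=
  Subtype.ext (Sym2.inf_eq_inf_and_sup_eq_sup.1 h)

lemma adj_first (e : T.edgeSet) (i : Fin m) (h : i.val = 0) :
    (mSubdivision T m).Adj (Sum.inl (Sym2.inf e.1)) (Sum.inr (e, i)) := by
  simp [mSubdivision, SimpleGraph.fromRel_adj, h]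

lemma adj_last (e : T.edgeSet) (i : Fin m) (h : i.val = m - 1) :
    (mSubdivision T m).Adj (Sum.inr (e, i)) (Sum.inl (Sym2.sup e.1)) := by
  simp [mSubdivision, SimpleGraph.fromRel_adj, h]

lemma adj_mid (e : T.edgeSet) (i j : Fin m) (h : i.val + 1 = j.val) :
    (mSubdivision T m).Adj (Sum.inr (e, i)) (Sum.inr (e, j)) := by
  simp only [mSubdivision, SimpleGraph.fromRel_adj]
  refine ⟨?_, Or.inl ⟨trivial, h⟩⟩
  intro hh
  simp at hh
  subst hh
  omega

/-- There is a walk of length `k`. -/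
def HasW {W : Type*} (G : SimpleGraph W) (x y : W) (k : ℕ) : Prop :=
  ∃ p : G.Walk x y, p.length = k

lemma HasW.symm {W : Type*} {G : SimpleGraph W} {x y : W} {k : ℕ} (h : HasW G x y k) :
    HasW G y x k := by
  obtain ⟨p, hp⟩ := h
  exact ⟨p.reverse, by simpa using hp⟩

lemma HasW.trans {W : Type*} {G : SimpleGraph W} {x y z : W} {k l : ℕ} (h : HasW G x y k)
    (h' : HasW G y z l) : HasW G x z (k + l) := by
  obtain ⟨p, hp⟩ := h
  obtain ⟨q, hq⟩ := h'
  exact ⟨p.append q, by simp [hp, hq]⟩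

lemma HasW.of_adj {W : Type*} {G : SimpleGraph W} {x y : W} (h : G.Adj x y) : HasW G x y 1 :=
  ⟨h.toWalk, by simp⟩

lemma HasW.dist_le {W : Type*} {G : SimpleGraph W} {x y : W} {k : ℕ} (h : HasW G x y k) :
    G.dist x y ≤ k := by
  obtain ⟨p, hp⟩ := h
  exact hp ▸ SimpleGraph.dist_le p

lemma hasW_mid (e : T.edgeSet) (k : ℕ) : ∀ (i j : Fin m), i.val + k = j.val →
    HasW (mSubdivision T m) (Sum.inr (e, i)) (Sum.inr (e, j)) k := by
  induction k with
  | zero =>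
    intro i j h
    have : i = j := Fin.ext (by simpa using h)
    subst this
    exact ⟨SimpleGraph.Walk.nil, rfl⟩
  | succ k ih =>
    intro i j h
    have hj := j.2
    exact (ih i ⟨i.val + k, by omega⟩ rfl).trans
      (HasW.of_adj (adj_mid e _ _ (by simp only; omega)))

lemma hasW_inf (e : T.edgeSet) (i : Fin m) :
    HasW (mSubdivision T m) (Sum.inl (Sym2.inf e.1)) (Sum.inr (e, i)) (i.val + 1) := by
  have hi := i.2
  rw [add_comm]
  exact (HasW.of_adj (adj_first e ⟨0, by omega⟩ rfl)).trans (hasW_mid e _ _ _ (by simp))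

lemma hasW_sup (e : T.edgeSet) (i : Fin m) :
    HasW (mSubdivision T m) (Sum.inr (e, i)) (Sum.inl (Sym2.sup e.1)) (m - i.val) := by
  have hi := i.2
  have h : m - i.val = (m - 1 - i.val) + 1 := by omega
  rw [h]
  exact (hasW_mid e (m - 1 - i.val) i ⟨m - 1, by omega⟩ (by simp only; omega)).trans
    (HasW.of_adj (adj_last e _ rfl))

lemma hasW_edge (hm : 1 ≤ m) {a b : V} (h : T.Adj a b) :
    HasW (mSubdivision T m) (Sum.inl a) (Sum.inl b) (m + 1) := by
  have key : ∀ e : T.edgeSet, HasW (mSubdivision T m) (Sum.inl (Sym2.inf e.1))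
      (Sum.inl (Sym2.sup e.1)) (m + 1) := by
    intro e
    have := (hasW_inf e (⟨0, hm⟩ : Fin m)).trans (hasW_sup e _)
    simpa [add_comm] using this
  rcases le_total a b with hab | hab
  · simpa [hab] using key ⟨s(a, b), h⟩
  · simpa [hab] using (key ⟨s(a, b), h⟩).symm

lemma hasW_inl (hm : 1 ≤ m) {a b : V} (p : T.Walk a b) :
    HasW (mSubdivision T m) (Sum.inl a) (Sum.inl b) ((m + 1) * p.length) := by
  induction p with
  | nil => exact ⟨SimpleGraph.Walk.nil, by simp⟩
  | cons h p ih =>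
    have := (hasW_edge hm h).trans ih
    rwa [SimpleGraph.Walk.length_cons, mul_add, mul_one, add_comm]

lemma sub_connected (hT : T.IsTree) (hm : 1 ≤ m) : (mSubdivision T m).Connected := by
  obtain ⟨r⟩ := hT.connected.nonempty
  have h0 : ∀ v, (mSubdivision T m).Reachable (Sum.inl r) (Sum.inl v) := by
    intro v
    obtain ⟨p⟩ := hT.connected r v
    obtain ⟨q, _⟩ := hasW_inl hm p
    exact ⟨q⟩
  have h1 : ∀ x, (mSubdivision T m).Reachable (Sum.inl r) x := by
    rintro (v | ⟨e, i⟩)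
    · exact h0 v
    · obtain ⟨q, _⟩ := hasW_inf e i
      exact (h0 _).trans ⟨q⟩
  have : Nonempty (V ⊕ (T.edgeSet × Fin m)) := ⟨Sum.inl r⟩
  exact ⟨fun x y => (h1 x).symm.trans (h1 y)⟩

/-- Interpolated distance function. -/
noncomputable def F (T : SimpleGraph V) (m : ℕ) (u : V) : V ⊕ (T.edgeSet × Fin m) → ℤ
  | Sum.inl v => (m + 1) * T.dist u v
  | Sum.inr (e, i) => (m - i.val) * T.dist u (Sym2.inf e.1) + (i.val + 1) * T.dist u (Sym2.sup e.1)

lemma F_adj (hT : T.IsTree) (u : V) {x y : V ⊕ (T.edgeSet × Fin m)}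
    (h : (mSubdivision T m).Adj x y) : F T m u y ≤ F T m u x + 1 := by
  have key : ∀ e : T.edgeSet, ((T.dist u (Sym2.inf e.1) : ℤ) = T.dist u (Sym2.sup e.1) + 1) ∨
      ((T.dist u (Sym2.sup e.1) : ℤ) = T.dist u (Sym2.inf e.1) + 1) := by
    intro e
    rcases hT.dist_eq_dist_add_one_of_adj u (adj_inf_sup e) with h | h
    · left; exact_mod_cast h
    · right; exact_mod_cast h
  have hlast : ∀ i : Fin m, i.val = m - 1 → (i.val : ℤ) = m - 1 := by
    intro i hi; have := i.2; omega
  rw [mSubdivision, SimpleGraph.fromRel_adj] at h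
  obtain ⟨-, h⟩ := h
  rcases x with v | ⟨e, i⟩ <;> rcases y with w | ⟨f, j⟩
  · simp at h
  · simp only [or_false] at h
    rcases h with ⟨hi, rfl⟩ | ⟨hi, rfl⟩
    · simp only [F, hi]
      rcases key f with h | h <;> rw [h] <;> push_cast <;> linarith
    · simp only [F, hlast j hi]
      rcases key f with h | h <;> rw [h] <;> push_cast <;> linarith
  · simp only [false_or] at h
    rcases h with ⟨hi, rfl⟩ | ⟨hi, rfl⟩
    · simp only [F, hi]
      rcases key e with h | h <;> rw [h] <;> push_cast <;> linarith
    · simp only [F, hlast i hi]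
      rcases key e with h | h <;> rw [h] <;> push_cast <;> linarith
  · rcases h with ⟨rfl, h⟩ | ⟨rfl, h⟩
    · have h' : (j.val : ℤ) = i.val + 1 := by omega
      simp only [F, h']
      rcases key e with h | h <;> rw [h] <;> linarith
    · have h' : (i.val : ℤ) = j.val + 1 := by omega
      simp only [F, h']
      rcases key f with h | h <;> rw [h] <;> linarith

lemma F_walk (hT : T.IsTree) (u : V) {x y : V ⊕ (T.edgeSet × Fin m)}
    (p : (mSubdivision T m).Walk x y) : F T m u y ≤ F T m u x + p.length := by
  induction p with
  | nil => simp
  | cons h p ih =>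
    have := F_adj hT u h
    rw [SimpleGraph.Walk.length_cons]
    push_cast
    linarith

lemma dist_inl (hT : T.IsTree) (hm : 1 ≤ m) (u : V) (y : V ⊕ (T.edgeSet × Fin m)) :
    ((mSubdivision T m).dist (Sum.inl u) y : ℤ) = F T m u y := by
  apply le_antisymm
  · have hin : ∀ v, HasW (mSubdivision T m) (Sum.inl u) (Sum.inl v) ((m + 1) * T.dist u v) := by
      intro v
      obtain ⟨p, hp⟩ := hT.connected.exists_walk_length_eq_dist u v
      exact hp ▸ hasW_inl hm p
    rcases y with v | ⟨e, i⟩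
    · have := (hin v).dist_le
      simp only [F]
      exact_mod_cast this
    · have h1 := ((hin _).trans (hasW_inf e i)).dist_le
      have h2 := ((hin _).trans (hasW_sup e i).symm).dist_le
      simp only [F]
      have hi := i.2
      zify [hi.le] at h1 h2
      rcases hT.dist_eq_dist_add_one_of_adj u (adj_inf_sup e) with h | h
      · rw [h] at h1 ⊢
        push_cast at h1 ⊢
        linarith
      · rw [h] at h2 ⊢
        push_cast at h2 ⊢
        linarith
  · obtain ⟨p, hp⟩ := (sub_connected hT hm).exists_walk_length_eq_dist (Sum.inl u) y
    have := F_walk hT u p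
    rw [hp] at this
    simpa [F] using this

lemma dist_same (hT : T.IsTree) (hm : 1 ≤ m) (e : T.edgeSet) (i j : Fin m) :
    ((mSubdivision T m).dist (Sum.inr (e, i)) (Sum.inr (e, j)) : ℚ) = |(i : ℚ) - (j : ℚ)| := by
  wlog h : i ≤ j generalizing i j
  · rw [SimpleGraph.dist_comm, this j i (le_of_not_ge h), abs_sub_comm]
  have h1 := (hasW_mid e (j.val - i.val) i j (by omega)).dist_le
  have h2 := (sub_connected hT hm).dist_triangle (u := Sum.inl (Sym2.inf e.1))
    (v := Sum.inr (e, i)) (w := Sum.inr (e, j))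
  zify at h2
  rw [dist_inl hT hm, dist_inl hT hm] at h2
  have ha : T.dist (Sym2.inf e.1) (Sym2.sup e.1) = 1 :=
    SimpleGraph.dist_eq_one_iff_adj.2 (adj_inf_sup e)
  simp [F, ha] at h2
  have h3 : ((mSubdivision T m).dist (Sum.inr (e, i)) (Sum.inr (e, j))) + i.val = j.val := by
    have : i.val ≤ j.val := h
    omega
  rw [abs_sub_comm, ← h3, abs_of_nonneg] <;> push_cast <;> simp

lemma dist_diff (hT : T.IsTree) (hm : 1 ≤ m) {e f : T.edgeSet} (hef : e ≠ f) (i j : Fin m) :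
    ((mSubdivision T m).dist (Sum.inr (e, i)) (Sum.inr (f, j)) : ℤ) * (m + 1) =
      (m - i.val) * ((m - j.val) * T.dist (Sym2.inf e.1) (Sym2.inf f.1)
          + (j.val + 1) * T.dist (Sym2.inf e.1) (Sym2.sup f.1))
      + (i.val + 1) * ((m - j.val) * T.dist (Sym2.sup e.1) (Sym2.inf f.1)
          + (j.val + 1) * T.dist (Sym2.sup e.1) (Sym2.sup f.1)) := by
  have hc := sub_connected hT hm
  -- upper bounds
  have up : ∀ p q : V, ((mSubdivision T m).dist (Sum.inr (e, i)) (Sum.inr (f, j)) : ℤ) ≤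
      F T m p (Sum.inr (e, i)) + (m + 1) * T.dist p q + F T m q (Sum.inr (f, j)) := by
    intro p q
    have t1 := hc.dist_triangle (u := Sum.inr (e, i)) (v := Sum.inl p) (w := Sum.inr (f, j))
    have t2 := hc.dist_triangle (u := Sum.inl p) (v := Sum.inl q) (w := Sum.inr (f, j))
    rw [SimpleGraph.dist_comm (u := Sum.inr (e, i)) (v := Sum.inl p)] at t1
    zify at t1 t2
    rw [dist_inl hT hm] at t1
    rw [dist_inl hT hm q, dist_inl hT hm p (Sum.inl q)] at t2
    simp only [F] at t1 t2 ⊢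
    linarith
  have lo : ∀ p : V, F T m p (Sum.inr (f, j)) ≤ F T m p (Sum.inr (e, i)) +
      ((mSubdivision T m).dist (Sum.inr (e, i)) (Sum.inr (f, j)) : ℤ) := by
    intro p
    have t1 := hc.dist_triangle (u := Sum.inl p) (v := Sum.inr (e, i)) (w := Sum.inr (f, j))
    zify at t1
    rwa [dist_inl hT hm, dist_inl hT hm] at t1
  have hab := adj_inf_sup e
  have hcd := adj_inf_sup f
  have hns : ¬ (Sym2.inf e.1 = Sym2.inf f.1 ∧ Sym2.sup e.1 = Sym2.sup f.1) :=
    fun h => hef (edge_ext h)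
  have hns2 : ¬ (Sym2.sup e.1 = Sym2.inf f.1 ∧ Sym2.inf e.1 = Sym2.sup f.1) := by
    rintro ⟨h1, h2⟩
    have h3 := Sym2.inf_le_sup e.1
    have h4 := Sym2.inf_le_sup f.1
    rw [h1, h2] at h3
    have h5 := le_antisymm h3 h4
    exact hcd.ne h5.symm
  simp only [F] at up lo
  generalize Sym2.inf e.1 = a at *
  generalize Sym2.sup e.1 = b at *
  generalize Sym2.inf f.1 = c at *
  generalize Sym2.sup f.1 = d at *
  generalize (mSubdivision T m).dist (Sum.inr (e, i)) (Sum.inr (f, j)) = D at *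
  have q1 : T.dist a b = 1 := SimpleGraph.dist_eq_one_iff_adj.2 hab
  have q2 : T.dist b a = 1 := SimpleGraph.dist_eq_one_iff_adj.2 hab.symm
  have q3 : T.dist c d = 1 := SimpleGraph.dist_eq_one_iff_adj.2 hcd
  have q4 : T.dist d c = 1 := SimpleGraph.dist_eq_one_iff_adj.2 hcd.symm
  have uac := up a c
  have uad := up a d
  have ubc := up b c
  have ubd := up b d
  have la := lo a
  have lb := lo b
  simp only [q1, q2, q3, q4, SimpleGraph.dist_self, Nat.cast_zero, Nat.cast_one, mul_zero, mul_one,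
    zero_add, add_zero] at uac uad ubc ubd la lb
  have e1 := hT.dist_eq_dist_add_one_of_adj a hcd
  have e2 := hT.dist_eq_dist_add_one_of_adj b hcd
  have e3 := hT.dist_eq_dist_add_one_of_adj c hab
  have e4 := hT.dist_eq_dist_add_one_of_adj d hab
  simp only [SimpleGraph.dist_comm (u := c), SimpleGraph.dist_comm (u := d)] at e3 e4
  have n1 := fun x y z => hns (no_square hT hab hcd x y z)
  have n2 := fun x y z => hns2 (no_square hT hab.symm hcd x y z)
  clear up lo hns hns2
  generalize T.dist a c = ac at *
  generalize T.dist a d = ad at *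
  generalize T.dist b c = bc at *
  generalize T.dist b d = bd at *
  generalize (i.val : ℤ) = I at *
  generalize (j.val : ℤ) = J at *
  exact fin_arith m I J D ac ad bc bd uac uad ubc ubd la lb
    (fin_cases4 ac ad bc bd e1 e2 e3 e4 n1 n2)

end Sub

section Final

variable [Fintype V] [LinearOrder V] {T : SimpleGraph V} [DecidableRel T.Adj] {m : ℕ}

lemma key1 (hT : T.IsTree) (u : V) :
    ∑ e : T.edgeSet, ((T.dist u (Sym2.inf e.1) : ℚ) + T.dist u (Sym2.sup e.1)) =
      2 * ∑ v, (T.dist u v : ℚ) - ((Fintype.card V : ℚ) - 1) := by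
  rw [sum_edges T (fun v => (T.dist u v : ℚ)), sum_deg_dist hT]

lemma key2 (hT : T.IsTree) :
    ∑ u, ∑ e : T.edgeSet, ((T.dist u (Sym2.inf e.1) : ℚ) + T.dist u (Sym2.sup e.1)) =
      2 * ∑ u, ∑ v, (T.dist u v : ℚ) - (Fintype.card V : ℚ) * ((Fintype.card V : ℚ) - 1) := by
  rw [Finset.sum_congr rfl fun u _ => key1 hT u, Finset.sum_sub_distrib, ← Finset.mul_sum]
  simp
  ring

lemma card_edges (hT : T.IsTree) : (Fintype.card T.edgeSet : ℚ) = (Fintype.card V : ℚ) - 1 := by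
  have h2 := hT.card_edgeFinset
  rw [SimpleGraph.edgeFinset_card] at h2
  rw [← h2]; simp

lemma key3 (hT : T.IsTree) :
    ∑ e : T.edgeSet, ∑ f : T.edgeSet,
      (((T.dist (Sym2.inf e.1) (Sym2.inf f.1) : ℚ) + T.dist (Sym2.inf e.1) (Sym2.sup f.1))
      + ((T.dist (Sym2.sup e.1) (Sym2.inf f.1) : ℚ) + T.dist (Sym2.sup e.1) (Sym2.sup f.1))) =
      2 * (2 * ∑ u, ∑ v, (T.dist u v : ℚ) - (Fintype.card V : ℚ) * ((Fintype.card V : ℚ) - 1))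
        - 2 * ((Fintype.card V : ℚ) - 1) ^ 2 := by
  have h : ∀ e : T.edgeSet, ∑ f : T.edgeSet,
      (((T.dist (Sym2.inf e.1) (Sym2.inf f.1) : ℚ) + T.dist (Sym2.inf e.1) (Sym2.sup f.1))
      + ((T.dist (Sym2.sup e.1) (Sym2.inf f.1) : ℚ) + T.dist (Sym2.sup e.1) (Sym2.sup f.1))) =
      2 * ∑ v, ((T.dist v (Sym2.inf e.1) : ℚ) + T.dist v (Sym2.sup e.1))
        - 2 * ((Fintype.card V : ℚ) - 1) := by
    intro e
    rw [Finset.sum_add_distrib, key1 hT, key1 hT, Finset.sum_add_distrib]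
    simp only [SimpleGraph.dist_comm (v := Sym2.inf e.1), SimpleGraph.dist_comm (v := Sym2.sup e.1)]
    ring
  rw [Finset.sum_congr rfl fun e _ => h e, Finset.sum_sub_distrib, ← Finset.mul_sum,
    Finset.sum_comm, key2 hT, Finset.sum_const, Finset.card_univ, nsmul_eq_mul, card_edges hT]
  ring

lemma block1 (hT : T.IsTree) (hm : 1 ≤ m) (u : V) (e : T.edgeSet) :
    ∑ i : Fin m, ((mSubdivision T m).dist (Sum.inl u) (Sum.inr (e, i)) : ℚ) =
      (m : ℚ) * (m + 1) / 2 * ((T.dist u (Sym2.inf e.1) : ℚ) + T.dist u (Sym2.sup e.1)) := by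
  have h : ∀ i : Fin m, ((mSubdivision T m).dist (Sum.inl u) (Sum.inr (e, i)) : ℚ) =
      ((m : ℚ) - i) * T.dist u (Sym2.inf e.1) + ((i : ℚ) + 1) * T.dist u (Sym2.sup e.1) := by
    intro i
    have := dist_inl hT hm u (Sum.inr (e, i))
    simp only [F] at this
    exact_mod_cast this
  rw [Finset.sum_congr rfl fun i _ => h i, Finset.sum_add_distrib, ← Finset.sum_mul,
    ← Finset.sum_mul, sum_lin1, sum_lin2]
  ring

lemma block2 (hT : T.IsTree) (hm : 1 ≤ m) (e f : T.edgeSet) :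
    ∑ i : Fin m, ∑ j : Fin m, ((mSubdivision T m).dist (Sum.inr (e, i)) (Sum.inr (f, j)) : ℚ) =
      (m : ℚ) ^ 2 * (m + 1) / 4 *
      (((T.dist (Sym2.inf e.1) (Sym2.inf f.1) : ℚ) + T.dist (Sym2.inf e.1) (Sym2.sup f.1))
      + ((T.dist (Sym2.sup e.1) (Sym2.inf f.1) : ℚ) + T.dist (Sym2.sup e.1) (Sym2.sup f.1)))
      + if e = f then (m : ℚ) * (m ^ 2 - 1) / 3 - (m : ℚ) ^ 2 * (m + 1) / 2 else 0 := by
  by_cases hef : e = f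
  · subst hef
    rw [Finset.sum_congr rfl fun i _ => Finset.sum_congr rfl fun j _ => dist_same hT hm e i j,
      sum_abs]
    have q1 := SimpleGraph.dist_eq_one_iff_adj.2 (adj_inf_sup e)
    have q2 := SimpleGraph.dist_eq_one_iff_adj.2 (adj_inf_sup e).symm
    simp only [q1, q2, SimpleGraph.dist_self, if_true]
    push_cast
    ring
  · have hm0 : (m : ℚ) + 1 ≠ 0 := by positivity
    have h : ∀ i j : Fin m, ((mSubdivision T m).dist (Sum.inr (e, i)) (Sum.inr (f, j)) : ℚ) =
        (((m : ℚ) - i) * (((m : ℚ) - j) * T.dist (Sym2.inf e.1) (Sym2.inf f.1)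
          + ((j : ℚ) + 1) * T.dist (Sym2.inf e.1) (Sym2.sup f.1))
        + ((i : ℚ) + 1) * (((m : ℚ) - j) * T.dist (Sym2.sup e.1) (Sym2.inf f.1)
          + ((j : ℚ) + 1) * T.dist (Sym2.sup e.1) (Sym2.sup f.1))) / (m + 1) := by
      intro i j
      rw [eq_div_iff hm0]
      have := dist_diff hT hm hef i j
      exact_mod_cast this
    rw [Finset.sum_congr rfl fun i _ => Finset.sum_congr rfl fun j _ => h i j]
    simp only [← Finset.sum_div, Finset.sum_add_distrib, ← Finset.sum_mul, ← Finset.mul_sum,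
      sum_lin1, hef, if_false]
    have h2 := sum_lin2 m
    rw [Finset.sum_add_distrib] at h2
    simp only [h2]
    field_simp
    ring

end Final

end WSub

theorem wiener_mSubdivision {V : Type*} [Fintype V] [LinearOrder V] [Nonempty V]
    (T : SimpleGraph V) [DecidableRel T.Adj] (hT : T.IsTree)
    (m : ℕ) (hm : 1 ≤ m) :
    wienerIndex (mSubdivision T m) =
      ((m : ℚ) + 1) ^ 3 * wienerIndex T
        - (m : ℚ) * ((m : ℚ) + 1) ^ 2 * (Fintype.card V : ℚ) ^ 2 / 2
        + (m : ℚ) * ((m : ℚ) + 1) * (2 * (m : ℚ) + 1) * (Fintype.card V : ℚ) / 3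
        - (m : ℚ) * ((m : ℚ) ^ 2 - 1) / 6 := by
  have h11 : ∀ u v, ((mSubdivision T m).dist (Sum.inl u) (Sum.inl v) : ℚ)
      = ((m : ℚ) + 1) * T.dist u v := by
    intro u v
    have := WSub.dist_inl hT hm u (Sum.inl v)
    simp only [WSub.F] at this
    exact_mod_cast this
  have s11 : ∑ u : V, ∑ v : V, ((mSubdivision T m).dist (Sum.inl u) (Sum.inl v) : ℚ)
      = ((m : ℚ) + 1) * ∑ u : V, ∑ v : V, (T.dist u v : ℚ) := by
    simp only [h11, ← Finset.mul_sum]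
  have s12 : ∑ u : V, ∑ e : T.edgeSet, ∑ i : Fin m,
      ((mSubdivision T m).dist (Sum.inl u) (Sum.inr (e, i)) : ℚ)
      = (m : ℚ) * (m + 1) / 2 * (2 * ∑ u, ∑ v, (T.dist u v : ℚ)
        - (Fintype.card V : ℚ) * ((Fintype.card V : ℚ) - 1)) := by
    simp only [WSub.block1 hT hm, ← Finset.mul_sum]
    rw [WSub.key2 hT]
  have s21 : ∑ e : T.edgeSet, ∑ i : Fin m, ∑ u : V,
      ((mSubdivision T m).dist (Sum.inr (e, i)) (Sum.inl u) : ℚ)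
      = (m : ℚ) * (m + 1) / 2 * (2 * ∑ u, ∑ v, (T.dist u v : ℚ)
        - (Fintype.card V : ℚ) * ((Fintype.card V : ℚ) - 1)) := by
    rw [← s12, Finset.sum_comm]
    rw [Finset.sum_congr rfl fun e _ => Finset.sum_comm]
    rw [Finset.sum_comm]
    refine Finset.sum_congr rfl fun u _ => ?_
    rw [Finset.sum_comm]
    refine Finset.sum_congr rfl fun e _ => Finset.sum_congr rfl fun i _ => ?_
    rw [SimpleGraph.dist_comm]
  have s22 : ∑ e : T.edgeSet, ∑ i : Fin m, ∑ f : T.edgeSet, ∑ j : Fin m,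
      ((mSubdivision T m).dist (Sum.inr (e, i)) (Sum.inr (f, j)) : ℚ)
      = (m : ℚ) ^ 2 * (m + 1) / 4 * (2 * (2 * ∑ u, ∑ v, (T.dist u v : ℚ)
          - (Fintype.card V : ℚ) * ((Fintype.card V : ℚ) - 1))
          - 2 * ((Fintype.card V : ℚ) - 1) ^ 2)
        + ((Fintype.card V : ℚ) - 1) *
          ((m : ℚ) * (m ^ 2 - 1) / 3 - (m : ℚ) ^ 2 * (m + 1) / 2) := by
    rw [Finset.sum_congr rfl fun e _ => Finset.sum_comm]
    rw [Finset.sum_congr rfl fun e _ => Finset.sum_congr rfl fun f _ => WSub.block2 hT hm e f]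
    simp only [Finset.sum_add_distrib (f := fun f : T.edgeSet => (m : ℚ) ^ 2 * (m + 1) / 4 * _),
      Finset.sum_ite_eq, Finset.mem_univ, if_true]
    rw [Finset.sum_add_distrib, Finset.sum_const, Finset.card_univ, nsmul_eq_mul,
      WSub.card_edges hT, ← WSub.key3 hT]
    simp only [← Finset.mul_sum]
  unfold wienerIndex
  simp only [Fintype.sum_sum_type, Fintype.sum_prod_type, Finset.sum_add_distrib]
  rw [s11, s12, s21, s22]
  ring
end

section
/- Let T be a tree on a finite nonempty vertex type V with n = |V| vertices, and let m be an integer such that every vertex of T has degree at most m. Let G be the m-order Type-III growth graph of T. Then the Wiener index of G satisfies W(G) = (m−1)^2·W(T) + (m−1)^2·n^2 + 2(m−1)·n + 1. -/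
/-- The `m`-order Type-III growth graph of `T`: attach `m - deg_T u` new pendant
leaves to every vertex `u` of `T`, so that every original vertex has degree `m`. -/
def typeIIIGrowth {V : Type*} [Fintype V] (T : SimpleGraph V) [DecidableRel T.Adj] (m : ℕ) :
    SimpleGraph (V ⊕ (Σ v : V, Fin (m - T.degree v))) :=
  SimpleGraph.fromRel (fun x y =>
    match x, y with
    | Sum.inl u, Sum.inl v => T.Adj u v
    | Sum.inl u, Sum.inr p => u = p.1
    | _, _ => False)


namespace TypeIII

open SimpleGraph

/-- projection to the base vertex -/
def pr {V : Type*} {f : V → ℕ} : V ⊕ (Σ v : V, Fin (f v)) → V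
  | Sum.inl u => u
  | Sum.inr p => p.1

/-- leaf indicator -/
def lf {V : Type*} {f : V → ℕ} : V ⊕ (Σ v : V, Fin (f v)) → ℕ
  | Sum.inl _ => 0
  | Sum.inr _ => 1

section
variable {V : Type*} [Fintype V] (T : SimpleGraph V) [DecidableRel T.Adj] (m : ℕ)

lemma adj_ll (u v : V) : (typeIIIGrowth T m).Adj (Sum.inl u) (Sum.inl v) ↔ T.Adj u v := by
  simp only [typeIIIGrowth, SimpleGraph.fromRel_adj]
  constructor
  · rintro ⟨_, h | h⟩
    · exact h
    · exact h.symm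
  · intro h
    exact ⟨fun e => h.ne (Sum.inl.inj e), Or.inl h⟩

lemma adj_lr (u : V) (p : Σ v : V, Fin (m - T.degree v)) :
    (typeIIIGrowth T m).Adj (Sum.inl u) (Sum.inr p) ↔ u = p.1 := by
  simp [typeIIIGrowth, SimpleGraph.fromRel_adj]

lemma adj_rr (p q : Σ v : V, Fin (m - T.degree v)) :
    ¬ (typeIIIGrowth T m).Adj (Sum.inr p) (Sum.inr q) := by
  simp [typeIIIGrowth, SimpleGraph.fromRel_adj]

lemma lower (hT : T.Connected) {x y} (p : (typeIIIGrowth T m).Walk x y) (hxy : x ≠ y) :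
    T.dist (pr x) (pr y) + lf x + lf y ≤ p.length := by
  induction p with
  | nil => exact absurd rfl hxy
  | @cons x z y h q ih =>
    have key : T.dist (pr x) (pr z) + lf x + lf z = 1 := by
      rcases x with x | x <;> rcases z with z | z
      · have := (adj_ll T m x z).1 h
        simpa [pr, lf] using dist_eq_one_iff_adj.2 this
      · have := (adj_lr T m x z).1 h
        simp [pr, lf, this]
      · have := (adj_lr T m z x).1 h.symm
        simp [pr, lf, this]
      · exact absurd h (adj_rr T m x z)
    by_cases hz : z = y
    · subst hz
      rw [key, Walk.length_cons]
      omega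
    · have h1 := ih hz
      have h2 := hT.dist_triangle (u := pr x) (v := pr z) (w := pr y)
      rw [Walk.length_cons]
      omega

lemma upper_base (hT : T.Connected) (u v : V) :
    ∃ p : (typeIIIGrowth T m).Walk (Sum.inl u) (Sum.inl v), p.length = T.dist u v := by
  obtain ⟨p, hp⟩ := hT.exists_walk_length_eq_dist u v
  let f : T →g typeIIIGrowth T m := ⟨Sum.inl, fun {a b} h => (adj_ll T m a b).2 h⟩
  exact ⟨p.map f, by rw [Walk.length_map, hp]⟩

lemma toBase (x : V ⊕ (Σ v : V, Fin (m - T.degree v))) :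
    ∃ p : (typeIIIGrowth T m).Walk x (Sum.inl (pr x)), p.length = lf x := by
  rcases x with x | x
  · exact ⟨Walk.nil, rfl⟩
  · exact ⟨Walk.cons ((adj_lr T m x.1 x).2 rfl).symm Walk.nil, rfl⟩

lemma upper (hT : T.Connected) (x y) :
    ∃ p : (typeIIIGrowth T m).Walk x y, p.length = T.dist (pr x) (pr y) + lf x + lf y := by
  obtain ⟨p, hp⟩ := toBase T m x
  obtain ⟨q, hq⟩ := toBase T m y
  obtain ⟨r, hr⟩ := upper_base T m hT (pr x) (pr y)
  refine ⟨(p.append r).append q.reverse, ?_⟩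
  simp only [Walk.length_append, Walk.length_reverse]
  omega

lemma dist_growth (hT : T.Connected) (x y) (hxy : x ≠ y) :
    (typeIIIGrowth T m).dist x y = T.dist (pr x) (pr y) + lf x + lf y := by
  obtain ⟨p, hp⟩ := upper T m hT x y
  apply le_antisymm
  · rw [← hp]; exact dist_le p
  · obtain ⟨q, hq⟩ := p.reachable.exists_walk_length_eq_dist
    rw [← hq]; exact lower T m hT q hxy

lemma dist_growth_rat [DecidableEq V] (hT : T.Connected) (x y) :
    ((typeIIIGrowth T m).dist x y : ℚ) = (T.dist (pr x) (pr y) + lf x + lf y : ℚ)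
      - if x = y then 2 * (lf x : ℚ) else 0 := by
  split_ifs with h
  · subst h; simp; ring
  · rw [dist_growth T m hT x y h]; push_cast; ring

lemma parent (hT : T.IsTree) (u v : V) (h : v ≠ u) :
    ∃! w, T.Adj v w ∧ T.dist u v = T.dist u w + 1 := by
  have hc := hT.connected
  obtain ⟨p, hp⟩ := hc.exists_walk_length_eq_dist v u
  cases p with
  | nil => exact absurd rfl h
  | @cons _ w _ hvw q =>
    rw [Walk.length_cons] at hp
    have aux : ∀ w', T.Adj v w' → T.dist u v = T.dist u w' + 1 →
        ∃ (hh : T.Adj v w') (q' : T.Walk w' u), (Walk.cons hh q').IsPath := by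
      intro w' hh hd
      obtain ⟨q', hq'⟩ := hc.exists_walk_length_eq_dist w' u
      refine ⟨hh, q', Walk.isPath_of_length_eq_dist _ ?_⟩
      rw [Walk.length_cons, hq', dist_comm, dist_comm (u := v)]
      exact hd.symm
    have hw : T.dist u v = T.dist u w + 1 := by
      have h1 := dist_le q
      have h2 := hc.dist_triangle (u := u) (v := w) (w := v)
      rw [dist_eq_one_iff_adj.2 hvw.symm] at h2
      rw [dist_comm] at hp h1
      omega
    refine ⟨w, ⟨hvw, hw⟩, ?_⟩
    rintro w' ⟨ha, hd⟩
    obtain ⟨h1, q1, hp1⟩ := aux w' ha hd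
    obtain ⟨h2, q2, hp2⟩ := aux w hvw hw
    have := (hT.existsUnique_path v u).unique hp1 hp2
    have h3 := congrArg (fun r => r.snd) this
    simpa using h3

lemma parent_sum [DecidableEq V] (hT : T.IsTree) (u v : V) :
    (∑ w, if T.Adj v w ∧ T.dist u v = T.dist u w + 1 then (2 * (T.dist u v : ℚ) - 1) else 0)
      = 2 * (T.dist u v : ℚ) - 1 + if v = u then 1 else 0 := by
  by_cases h : v = u
  · subst h; simp
  · obtain ⟨w, hw, hu⟩ := parent T hT u v h
    rw [Finset.sum_eq_single w, if_pos hw, if_neg h, add_zero]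
    · intro b _ hb
      rw [if_neg]
      intro hb'
      exact hb (hu b hb')
    · simp

lemma deg_dist [DecidableEq V] (hT : T.IsTree) (u : V) :
    ∑ v, (T.degree v : ℚ) * T.dist u v
      = 2 * ∑ v, (T.dist u v : ℚ) - (Fintype.card V - 1) := by
  have h1 : ∀ v, (T.degree v : ℚ) * T.dist u v
      = ∑ w, if T.Adj v w then (T.dist u v : ℚ) else 0 := by
    intro v
    rw [← Finset.sum_filter, Finset.sum_const, nsmul_eq_mul, ← card_neighborFinset_eq_degree,
      neighborFinset_eq_filter]
  have h2 : ∀ v w, (if T.Adj v w then (T.dist u v : ℚ) else 0)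
      = (if T.Adj v w ∧ T.dist u v = T.dist u w + 1 then (T.dist u v : ℚ) else 0)
        + (if T.Adj w v ∧ T.dist u w = T.dist u v + 1 then (T.dist u v : ℚ) else 0) := by
    intro v w
    by_cases h : T.Adj v w
    · rcases hT.dist_eq_dist_add_one_of_adj u h with h' | h'
      · have : ¬ (T.dist u w = T.dist u v + 1) := by omega
        rw [if_pos h, if_pos ⟨h, h'⟩, if_neg (fun hh => this hh.2), add_zero]
      · have : ¬ (T.dist u v = T.dist u w + 1) := by omega
        rw [if_pos h, if_neg (fun hh => this hh.2), if_pos ⟨h.symm, h'⟩, zero_add]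
    · have : ¬ T.Adj w v := fun hh => h hh.symm
      simp [h, this]
  have h3 : ∀ v w, ((if T.Adj v w ∧ T.dist u v = T.dist u w + 1 then (T.dist u v : ℚ) else 0)
        + (if T.Adj v w ∧ T.dist u v = T.dist u w + 1 then (T.dist u w : ℚ) else 0))
      = if T.Adj v w ∧ T.dist u v = T.dist u w + 1 then (2 * (T.dist u v : ℚ) - 1) else 0 := by
    intro v w
    split_ifs with h
    · rw [h.2]; push_cast; ring
    · simp
  simp_rw [h1, h2, Finset.sum_add_distrib]
  rw [Finset.sum_comm (f := fun v w =>
    if T.Adj w v ∧ T.dist u w = T.dist u v + 1 then (T.dist u v : ℚ) else 0)]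
  simp_rw [← Finset.sum_add_distrib, h3, parent_sum T hT, Finset.sum_add_distrib,
    Finset.sum_sub_distrib, ← Finset.mul_sum]
  simp
  ring

lemma deg_sum [DecidableEq V] (hT : T.IsTree) :
    ∑ v, (T.degree v : ℚ) = 2 * (Fintype.card V - 1) := by
  have h1 := T.sum_degrees_eq_twice_card_edges
  have h2 := hT.card_edgeFinset
  have h3 : (T.edgeFinset.card : ℚ) + 1 = Fintype.card V := by exact_mod_cast h2
  have h4 : ∑ v, (T.degree v : ℚ) = 2 * T.edgeFinset.card := by exact_mod_cast h1
  rw [h4, ← h3]; ring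

lemma sum_pr (hdeg : ∀ v : V, T.degree v ≤ m) (F : V → ℚ) :
    ∑ x : V ⊕ (Σ v : V, Fin (m - T.degree v)), F (pr x)
      = ∑ v, ((m : ℚ) + 1 - T.degree v) * F v := by
  rw [Fintype.sum_sum_type, Fintype.sum_sigma, ← Finset.sum_add_distrib]
  refine Finset.sum_congr rfl fun v _ => ?_
  simp [pr, Nat.cast_sub (hdeg v)]
  ring

lemma sum_lf (hdeg : ∀ v : V, T.degree v ≤ m) :
    ∑ x : V ⊕ (Σ v : V, Fin (m - T.degree v)), (lf x : ℚ)
      = ∑ v, ((m : ℚ) - T.degree v) := by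
  rw [Fintype.sum_sum_type, Fintype.sum_sigma]
  simp [lf, Nat.cast_sub (hdeg _)]

end

end TypeIII

theorem wiener_typeIIIGrowth {V : Type*} [Fintype V] [DecidableEq V] [Nonempty V]
    (T : SimpleGraph V) [DecidableRel T.Adj] (hT : T.IsTree)
    (m : ℕ) (hdeg : ∀ v : V, T.degree v ≤ m) :
    wienerIndex (typeIIIGrowth T m) =
      ((m : ℚ) - 1) ^ 2 * wienerIndex T
        + ((m : ℚ) - 1) ^ 2 * (Fintype.card V : ℚ) ^ 2
        + 2 * ((m : ℚ) - 1) * (Fintype.card V : ℚ) + 1 := by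
  have hds := TypeIII.deg_sum T hT
  have hdd := TypeIII.deg_dist T hT
  set n : ℚ := (Fintype.card V : ℚ) with hn
  set S : ℚ := ∑ u : V, ∑ v : V, (T.dist u v : ℚ) with hS
  -- number of leaves and of vertices
  have hL : ∑ x : V ⊕ (Σ v : V, Fin (m - T.degree v)), (TypeIII.lf x : ℚ)
      = m * n - 2 * (n - 1) := by
    rw [TypeIII.sum_lf T m hdeg, Finset.sum_sub_distrib, hds]
    simp [hn]; ring
  have hN : ∑ _x : V ⊕ (Σ v : V, Fin (m - T.degree v)), (1 : ℚ)
      = (m + 1) * n - 2 * (n - 1) := by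
    rw [TypeIII.sum_pr T m hdeg (fun _ => 1)]
    simp only [mul_one]
    rw [Finset.sum_sub_distrib, hds]
    simp [hn]; ring
  have hinner : ∀ u : V, ∑ y : V ⊕ (Σ v : V, Fin (m - T.degree v)),
      (T.dist u (TypeIII.pr y) : ℚ) = (m - 1) * ∑ v, (T.dist u v : ℚ) + (n - 1) := by
    intro u
    rw [TypeIII.sum_pr T m hdeg (fun v => (T.dist u v : ℚ))]
    simp_rw [sub_mul]
    rw [Finset.sum_sub_distrib, hdd, ← Finset.mul_sum]
    ring
  have hsw : ∑ u, (T.degree u : ℚ) * ∑ v, (T.dist u v : ℚ) = 2 * S - n * (n - 1) := by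
    simp_rw [Finset.mul_sum]
    rw [Finset.sum_comm]
    have : ∀ v, ∑ u, (T.degree u : ℚ) * (T.dist u v : ℚ)
        = 2 * ∑ u, (T.dist v u : ℚ) - (n - 1) := by
      intro v
      rw [← hdd v]
      exact Finset.sum_congr rfl fun u _ => by rw [SimpleGraph.dist_comm]
    simp_rw [this]
    rw [Finset.sum_sub_distrib, ← Finset.mul_sum]
    simp [hn, hS]
    ring
  have hdist : ∑ x : V ⊕ (Σ v : V, Fin (m - T.degree v)),
      ∑ y : V ⊕ (Σ v : V, Fin (m - T.degree v)),
        (T.dist (TypeIII.pr x) (TypeIII.pr y) : ℚ)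
      = (m - 1) * ((m + 1) * S - (2 * S - n * (n - 1)))
        + (n - 1) * ((m + 1) * n - 2 * (n - 1)) := by
    simp_rw [hinner]
    rw [Finset.sum_add_distrib, ← Finset.mul_sum,
      TypeIII.sum_pr T m hdeg (fun u => ∑ v, (T.dist u v : ℚ))]
    simp_rw [sub_mul]
    rw [Finset.sum_sub_distrib, hsw, ← Finset.mul_sum, ← hN, Finset.mul_sum]
    simp [hS]
    ring
  unfold wienerIndex
  simp_rw [TypeIII.dist_growth_rat T m hT.connected]
  have hexp : ∑ x : V ⊕ (Σ v : V, Fin (m - T.degree v)),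
      ∑ y : V ⊕ (Σ v : V, Fin (m - T.degree v)),
        ((T.dist (TypeIII.pr x) (TypeIII.pr y) + TypeIII.lf x + TypeIII.lf y : ℚ)
          - if x = y then 2 * (TypeIII.lf x : ℚ) else 0)
      = (m - 1) * ((m + 1) * S - (2 * S - n * (n - 1)))
        + (n - 1) * ((m + 1) * n - 2 * (n - 1))
        + 2 * ((m + 1) * n - 2 * (n - 1)) * (m * n - 2 * (n - 1))
        - 2 * (m * n - 2 * (n - 1)) := by
    simp_rw [Finset.sum_sub_distrib, Finset.sum_add_distrib]
    rw [hdist, hL]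
    have e1 : ∑ x : V ⊕ (Σ v : V, Fin (m - T.degree v)),
      ∑ _y : V ⊕ (Σ v : V, Fin (m - T.degree v)), (TypeIII.lf x : ℚ)
        = ((m + 1) * n - 2 * (n - 1)) * (m * n - 2 * (n - 1)) := by
      rw [← hN, ← hL, Finset.sum_mul_sum, Finset.sum_comm]
      simp
    have e2 : ∑ _x : V ⊕ (Σ v : V, Fin (m - T.degree v)), (m * n - 2 * (n - 1) : ℚ)
        = ((m + 1) * n - 2 * (n - 1)) * (m * n - 2 * (n - 1)) := by
      rw [← hN, Finset.sum_mul]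
      simp
    have e3 : ∑ x : V ⊕ (Σ v : V, Fin (m - T.degree v)),
      ∑ y : V ⊕ (Σ v : V, Fin (m - T.degree v)),
        (if x = y then 2 * (TypeIII.lf x : ℚ) else 0) = 2 * (m * n - 2 * (n - 1)) := by
      rw [← hL, Finset.mul_sum]
      simp
    rw [e1, e2, e3]
    ring
  rw [hexp]
  ring
end

section
/- Let T be a tree on a finite nonempty vertex type V with n = |V| vertices. Then the sum over all ordered pairs (u,v) of vertices of (deg_T(u) + deg_T(v))·dist_T(u,v) equals 8·W(T) − 2n(n−1); equivalently, the additive degree Wiener index W†(T) = (1/2)·Σ_{u,v} (deg_T(u)+deg_T(v))·dist_T(u,v) equals 4·W(T) − n(n−1). -/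
theorem adw_unique {V : Type*} (T : SimpleGraph V) (hT : T.IsTree) (u v : V) (hv : v ≠ u) :
    ∃! w, T.Adj v w ∧ T.dist v u = T.dist w u + 1 := by
  have ex : ∃ w, T.Adj v w ∧ T.dist v u = T.dist w u + 1 := by
    obtain ⟨p, hp⟩ := hT.connected.exists_walk_length_eq_dist v u
    cases p with
    | nil => exact absurd rfl hv
    | @cons _ w _ h p =>
      refine ⟨w, h, ?_⟩
      have h1 := T.dist_le p
      have h2 := hT.dist_eq_dist_add_one_of_adj u h
      rw [T.dist_comm (u := u) (v := v), T.dist_comm (u := u) (v := w)] at h2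
      rw [SimpleGraph.Walk.length_cons] at hp
      omega
  obtain ⟨w, hw, hd⟩ := ex
  refine ⟨w, ⟨hw, hd⟩, ?_⟩
  rintro x ⟨hx, hxd⟩
  obtain ⟨p, hp⟩ := hT.connected.exists_walk_length_eq_dist w u
  obtain ⟨q, hq⟩ := hT.connected.exists_walk_length_eq_dist x u
  have h1 := SimpleGraph.Walk.isPath_of_length_eq_dist (SimpleGraph.Walk.cons hw p)
    (by rw [SimpleGraph.Walk.length_cons]; omega)
  have h2 := SimpleGraph.Walk.isPath_of_length_eq_dist (SimpleGraph.Walk.cons hx q)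
    (by rw [SimpleGraph.Walk.length_cons]; omega)
  have h3 := (hT.existsUnique_path v u).unique h1 h2
  have h4 := congrArg SimpleGraph.Walk.snd h3
  simpa using h4.symm

open Classical in
theorem adw_fixed {V : Type*} [Fintype V]
    (T : SimpleGraph V) [DecidableRel T.Adj] (hT : T.IsTree) (u : V) :
    ∑ v : V, (T.degree v : ℚ) * (T.dist v u : ℚ) =
      2 * ∑ v : V, (T.dist v u : ℚ) - ((Fintype.card V : ℚ) - 1) := by
  let f : V → V → ℚ := fun v w => if T.Adj v w ∧ T.dist v u = T.dist w u + 1 then 1 else 0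
  have hf : ∀ v, ∑ w, f v w = if v = u then 0 else 1 := by
    intro v
    split_ifs with h
    · subst h
      simp [f]
    · obtain ⟨w, hw, huq⟩ := adw_unique T hT u v h
      rw [Finset.sum_eq_single w]
      · exact if_pos hw
      · intro x _ hx
        exact if_neg fun h => hx (huq x h)
      · simp
  have hdeg : ∀ v, (T.degree v : ℚ) = ∑ w, (f v w + f w v) := by
    intro v
    rw [← T.card_neighborFinset_eq_degree, T.neighborFinset_eq_filter, Finset.card_filter]
    push_cast
    refine Finset.sum_congr rfl fun w _ => ?_
    by_cases h : T.Adj v w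
    · have h2 := hT.dist_eq_dist_add_one_of_adj u h
      rw [T.dist_comm (u := u) (v := v), T.dist_comm (u := u) (v := w)] at h2
      rcases h2 with h2 | h2 <;> simp [f, h, h.symm, h2] <;> omega
    · have h' : ¬ T.Adj w v := fun k => h k.symm
      simp [f, h, h']
  calc ∑ v : V, (T.degree v : ℚ) * (T.dist v u : ℚ)
      = ∑ v, ∑ w, f v w * T.dist v u + ∑ v, ∑ w, f w v * T.dist v u := by
        simp_rw [hdeg, Finset.sum_mul, add_mul, Finset.sum_add_distrib]
    _ = ∑ v, ∑ w, f v w * T.dist v u + ∑ v, ∑ w, f v w * T.dist w u := by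
        congr 1
        exact Finset.sum_comm
    _ = ∑ v, ∑ w, f v w * (2 * T.dist v u - 1) := by
        rw [← Finset.sum_add_distrib]
        refine Finset.sum_congr rfl fun v _ => ?_
        rw [← Finset.sum_add_distrib]
        refine Finset.sum_congr rfl fun w _ => ?_
        by_cases h : T.Adj v w ∧ T.dist v u = T.dist w u + 1
        · simp only [f, if_pos h]
          rw [h.2]
          push_cast
          ring
        · simp only [f, if_neg h]
          ring
    _ = ∑ v, ((2 * (T.dist v u : ℚ) - 1) + if v = u then 1 else 0) := by
        refine Finset.sum_congr rfl fun v _ => ?_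
        rw [← Finset.sum_mul, hf]
        split_ifs with h
        · subst h
          simp
        · ring
    _ = _ := by
        rw [Finset.sum_add_distrib, Finset.sum_sub_distrib, ← Finset.mul_sum]
        simp
        ring

theorem additive_degree_wiener {V : Type*} [Fintype V] [Nonempty V]
    (T : SimpleGraph V) [DecidableRel T.Adj] (hT : T.IsTree) :
    ∑ u : V, ∑ v : V, ((T.degree u : ℚ) + (T.degree v : ℚ)) * (T.dist u v : ℚ) =
      8 * wienerIndex T
        - 2 * (Fintype.card V : ℚ) * ((Fintype.card V : ℚ) - 1) := by
  have key : ∑ u : V, ∑ v : V, (T.degree v : ℚ) * (T.dist v u : ℚ) =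
      2 * (∑ u : V, ∑ v : V, (T.dist u v : ℚ))
        - (Fintype.card V : ℚ) * ((Fintype.card V : ℚ) - 1) := by
    simp_rw [adw_fixed T hT]
    rw [Finset.sum_sub_distrib, ← Finset.mul_sum, Finset.sum_comm]
    simp
    ring
  have h1 : ∑ u : V, ∑ v : V, (T.degree v : ℚ) * (T.dist u v : ℚ) =
      ∑ u : V, ∑ v : V, (T.degree v : ℚ) * (T.dist v u : ℚ) := by
    simp_rw [fun u v => T.dist_comm (u := u) (v := v)]
  have h2 : ∑ u : V, ∑ v : V, (T.degree u : ℚ) * (T.dist u v : ℚ) =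
      ∑ u : V, ∑ v : V, (T.degree v : ℚ) * (T.dist v u : ℚ) := Finset.sum_comm
  simp_rw [add_mul, Finset.sum_add_distrib]
  unfold wienerIndex
  rw [h1, h2, key]
  ring
end

section
/- Let T be a tree on a finite nonempty vertex type V with n = |V| vertices. Then the Wiener index of T satisfies W(T) ≤ (n+1)n(n−1)/6, i.e., W(T) ≤ C(n+1,3). -/
theorem wub_level {V : Type*} (f : V → ℕ) (s : Finset V) :
    (∀ u ∈ s, f u ≠ 0 → ∃ w ∈ s, f w + 1 = f u) →
      2 * ∑ u ∈ s, f u + s.card ≤ s.card * s.card ∧ ∀ u ∈ s, f u < s.card := by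
  classical
  induction s using Finset.induction_on_max_value f with
  | empty => simp
  | insert a s ha hmax ih =>
    intro h
    have hs : ∀ u ∈ s, f u ≠ 0 → ∃ w ∈ s, f w + 1 = f u := by
      intro u hu h0
      obtain ⟨w, hw, hwu⟩ := h u (Finset.mem_insert_of_mem hu) h0
      rcases Finset.mem_insert.1 hw with rfl | hw
      · have := hmax u hu
        omega
      · exact ⟨w, hw, hwu⟩
    obtain ⟨h1, h2⟩ := ih hs
    have hfa : f a ≤ s.card := by
      by_cases h0 : f a = 0
      · omega
      obtain ⟨w, hw, hwa⟩ := h a (Finset.mem_insert_self _ _) h0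
      rcases Finset.mem_insert.1 hw with rfl | hw
      · omega
      · have := h2 w hw
        omega
    rw [Finset.sum_insert ha, Finset.card_insert_of_notMem ha]
    refine ⟨by nlinarith, ?_⟩
    intro u hu
    rcases Finset.mem_insert.1 hu with rfl | hu
    · omega
    · have := h2 u hu
      omega

theorem wub_row {V : Type*} [Fintype V] (G : SimpleGraph V) (hG : G.Connected) (v : V) :
    2 * ∑ u, G.dist u v + Fintype.card V ≤ Fintype.card V * Fintype.card V := by
  refine (wub_level (fun u => G.dist u v) Finset.univ ?_).1
  intro u _ h0
  obtain ⟨p, hp⟩ := hG.exists_walk_length_eq_dist u v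
  cases p with
  | nil => simp at h0
  | @cons _ w _ hadj q =>
    refine ⟨w, Finset.mem_univ _, ?_⟩
    have h1 := SimpleGraph.dist_le q
    have h2 := hG.dist_triangle (u := u) (v := w) (w := v)
    rw [SimpleGraph.dist_eq_one_iff_adj.2 hadj] at h2
    simp only [SimpleGraph.Walk.length_cons] at hp
    show G.dist w v + 1 = G.dist u v
    omega

theorem wub_sum_split {V : Type*} [Fintype V] (v : V) [Fintype ({v}ᶜ : Set V)] (f : V → ℕ) :
    ∑ u, f u = f v + ∑ u : ({v}ᶜ : Set V), f u := by
  classical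
  rw [Fintype.sum_eq_add_sum_compl v f]
  congr 1
  exact Finset.sum_subtype _ (by simp) _

theorem wub_main (n : ℕ) : ∀ {V : Type*} [Fintype V] (G : SimpleGraph V), G.Connected →
    Fintype.card V = n + 1 →
    3 * ∑ u, ∑ v, G.dist u v + (n + 1) ≤ (n + 1) ^ 3 := by
  classical
  induction n with
  | zero =>
    intro V _ G hG hc
    have : Subsingleton V := Fintype.card_le_one_iff_subsingleton.1 (by omega)
    have h : ∀ u v, G.dist u v = 0 := fun u v => by rw [Subsingleton.elim u v]; simp
    simp [h]
  | succ n ih =>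
    intro V _ G hG hc
    have : Nontrivial V := Fintype.one_lt_card_iff_nontrivial.1 (by omega)
    obtain ⟨v, hv⟩ := hG.exists_connected_induce_compl_singleton_of_finite_nontrivial
    have hcard : Fintype.card ({v}ᶜ : Set V) = n + 1 := by
      rw [Fintype.card_compl_set]; simp [hc]
    have hi := ih (G.induce {v}ᶜ) hv hcard
    have hle : ∑ x : ({v}ᶜ : Set V), ∑ y : ({v}ᶜ : Set V), G.dist x y ≤
        ∑ x, ∑ y, (G.induce {v}ᶜ).dist x y := by
      refine Finset.sum_le_sum fun x _ => Finset.sum_le_sum fun y _ => ?_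
      obtain ⟨p, hp⟩ := hv.exists_walk_length_eq_dist x y
      rw [← hp, ← SimpleGraph.Walk.length_map (SimpleGraph.Embedding.induce ({v}ᶜ : Set V)).toHom p]
      exact SimpleGraph.dist_le _
    have hrow := wub_row G hG v
    have e1 : ∑ u, ∑ w, G.dist u w = ∑ w, G.dist w v +
        ∑ x : ({v}ᶜ : Set V), ∑ w, G.dist x w := by
      rw [wub_sum_split v (fun u => ∑ w, G.dist u w)]
      simp only [SimpleGraph.dist_comm (u := v)]
    have e2 : ∑ x : ({v}ᶜ : Set V), ∑ w, G.dist x w =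
        ∑ x : ({v}ᶜ : Set V), G.dist x v +
        ∑ x : ({v}ᶜ : Set V), ∑ y : ({v}ᶜ : Set V), G.dist x y := by
      rw [← Finset.sum_add_distrib]
      exact Finset.sum_congr rfl fun x _ => wub_sum_split v (fun w => G.dist x w)
    have e3 := wub_sum_split v (fun w => G.dist w v)
    simp only [SimpleGraph.dist_self, zero_add] at e3
    rw [e1, e2, ← e3]
    rw [hc] at hrow
    nlinarith

theorem wiener_upper_bound {V : Type*} [Fintype V] [Nonempty V]
    (T : SimpleGraph V) (hT : T.IsTree) :
    wienerIndex T ≤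
      ((Fintype.card V : ℚ) + 1) * (Fintype.card V : ℚ) * ((Fintype.card V : ℚ) - 1) / 6 := by
  obtain ⟨n, hn⟩ : ∃ n, Fintype.card V = n + 1 :=
    ⟨Fintype.card V - 1, by have := Fintype.card_pos (α := V); omega⟩
  have h := wub_main n T hT.connected hn
  have h' : (3 : ℚ) * ∑ u, ∑ v, (T.dist u v : ℚ) + (n + 1) ≤ (n + 1) ^ 3 := by
    exact_mod_cast h
  rw [wienerIndex, hn]
  push_cast
  nlinarith
end
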